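/- Let f : ℝ^{m×n} → ℝ be L-smooth with respect to the Frobenius norm and bounded below by f⋆ = inf_W f(W) > −∞. Let η > 0, μ > 0, and let (W_t)_{t≥0} satisfy W_{t+1} = W_t + ΔW_t with ⟨∇f(W_t), ΔW_t⟩ ≤ −μ·η·‖∇f(W_t)‖_F² and ‖ΔW_t‖_F ≤ η·√(mn) for all t. Then for every T ≥ 1, (1/T)·Σ_{t=0}^{T−1} ‖∇f(W_t)‖_F² ≤ (f(W_0) − f⋆)/(μ·η·T) + (L/(2μ))·η·mn. -/

import Mathlib

open scoped RealInnerProductSpace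

/-!
By the descent lemma, an aligned step `d` from `x` decreases `f` by at least a multiple of
`‖f' x‖²`, up to the smoothness error `L / 2 * ‖d‖²`. Summing over the iterates telescopes the
values of `f`, so the accumulated gradient norms are paid for by `f (W 0) - inf f` and the
accumulated errors.
-/

section Descent

variable {E : Type*} [NormedAddCommGroup E] [NormedSpace ℝ E] {f : E → ℝ} {L : ℝ}

lemma apply_add_le_of_norm_fderiv_sub_le (hf : Differentiable ℝ f) {x : E}
    (hlip : ∀ y, ‖fderiv ℝ f y - fderiv ℝ f x‖ ≤ L * ‖y - x‖) (d : E) :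
    f (x + d) ≤ f x + fderiv ℝ f x d + L / 2 * ‖d‖ ^ 2 := by
  let B : ℝ → ℝ := fun s ↦ f x + s * fderiv ℝ f x d + L / 2 * ‖d‖ ^ 2 * s ^ 2
  have hline (s : ℝ) : HasDerivAt (fun s : ℝ ↦ f (x + s • d)) (fderiv ℝ f (x + s • d) d) s :=
    (hf _).hasFDerivAt.comp_hasDerivAt s
      (by simpa using ((hasDerivAt_id s).smul_const d).const_add x)
  have hB (s : ℝ) : HasDerivAt B (fderiv ℝ f x d + L * ‖d‖ ^ 2 * s) s := by
    refine ((((hasDerivAt_id s).mul_const _).const_add (f x)).add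
      ((hasDerivAt_pow 2 s).const_mul (L / 2 * ‖d‖ ^ 2))).congr_deriv ?_
    norm_num
    ring
  have hslope (s : ℝ) (hs : 0 ≤ s) :
      fderiv ℝ f (x + s • d) d ≤ fderiv ℝ f x d + L * ‖d‖ ^ 2 * s := by
    rw [← sub_le_iff_le_add']
    calc fderiv ℝ f (x + s • d) d - fderiv ℝ f x d
        ≤ ‖fderiv ℝ f (x + s • d) - fderiv ℝ f x‖ * ‖d‖ :=
          (le_abs_self _).trans ((fderiv ℝ f (x + s • d) - fderiv ℝ f x).le_opNorm d)
      _ ≤ L * ‖x + s • d - x‖ * ‖d‖ := by gcongr; exact hlip _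
      _ = L * ‖d‖ ^ 2 * s := by
          rw [add_sub_cancel_left, norm_smul, Real.norm_of_nonneg hs]
          ring
  have hle : f (x + (1 : ℝ) • d) ≤ B 1 :=
    image_le_of_deriv_right_le_deriv_boundary
      (fun s _ ↦ (hline s).continuousAt.continuousWithinAt)
      (fun s _ ↦ (hline s).hasDerivWithinAt) (by simp [B])
      (fun s _ ↦ (hB s).continuousAt.continuousWithinAt)
      (fun s _ ↦ (hB s).hasDerivWithinAt) (fun s hs ↦ hslope s hs.1)
      (Set.right_mem_Icc.2 zero_le_one)
  simpa [B] using hle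

lemma mul_sum_norm_fderiv_sq_le (hf : Differentiable ℝ f)
    (hlip : ∀ x y, ‖fderiv ℝ f x - fderiv ℝ f y‖ ≤ L * ‖x - y‖) {c : ℝ} {W ΔW : ℕ → E}
    (hstep : ∀ t, W (t + 1) = W t + ΔW t)
    (halign : ∀ t, fderiv ℝ f (W t) (ΔW t) ≤ -(c * ‖fderiv ℝ f (W t)‖ ^ 2)) (T : ℕ) :
    c * ∑ t ∈ Finset.range T, ‖fderiv ℝ f (W t)‖ ^ 2 ≤
      f (W 0) - f (W T) + L / 2 * ∑ t ∈ Finset.range T, ‖ΔW t‖ ^ 2 := by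
  have hdescent (t : ℕ) : c * ‖fderiv ℝ f (W t)‖ ^ 2 ≤
      f (W t) - f (W (t + 1)) + L / 2 * ‖ΔW t‖ ^ 2 := by
    have hsmooth := apply_add_le_of_norm_fderiv_sub_le hf (hlip · (W t)) (ΔW t)
    rw [← hstep] at hsmooth
    linarith [halign t]
  rw [← Finset.sum_range_sub' (fun t ↦ f (W t)), Finset.mul_sum, Finset.mul_sum,
    ← Finset.sum_add_distrib]
  exact Finset.sum_le_sum fun t _ ↦ hdescent t

end Descent

lemma nonneg_of_norm_sub_le_mul {E F : Type*} [NormedAddCommGroup E] [Nontrivial E]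
    [SeminormedAddCommGroup F] {g : E → F} {L : ℝ}
    (hlip : ∀ x y, ‖g x - g y‖ ≤ L * ‖x - y‖) : 0 ≤ L := by
  obtain ⟨x, y, hxy⟩ := exists_pair_ne E
  exact nonneg_of_mul_nonneg_left ((norm_nonneg _).trans (hlip x y))
    (norm_pos_iff.2 (sub_ne_zero.2 hxy))

lemma sqrt_mul_eq_zero_of_subsingleton_euclideanSpace {m n : ℕ}
    (h : Subsingleton (EuclideanSpace ℝ (Fin m × Fin n))) : √((m : ℝ) * n) = 0 := by
  have hdim : m * n = 0 := by
    simpa using Module.finrank_zero_of_subsingleton (R := ℝ)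
      (M := EuclideanSpace ℝ (Fin m × Fin n))
  rw [← Nat.cast_mul, hdim, Nat.cast_zero, Real.sqrt_zero]

theorem trasmuon_stationarity_general {E : Type*} [NormedAddCommGroup E] [NormedSpace ℝ E]
    {f : E → ℝ} {L η μ ρ : ℝ} (hdiff : Differentiable ℝ f)
    (hlip : ∀ X Y, ‖fderiv ℝ f X - fderiv ℝ f Y‖ ≤ L * ‖X - Y‖)
    (hbdd : BddBelow (Set.range f)) (hη : 0 < η) (hμ : 0 < μ)
    (hρ : Subsingleton E → ρ = 0) {W ΔW : ℕ → E}
    (hstep : ∀ t, W (t + 1) = W t + ΔW t)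
    (halign : ∀ t, fderiv ℝ f (W t) (ΔW t) ≤ -(μ * η * ‖fderiv ℝ f (W t)‖ ^ 2))
    (hbound : ∀ t, ‖ΔW t‖ ≤ η * ρ) (T : ℕ) (hT : 1 ≤ T) :
    (1 / (T : ℝ)) * ∑ t ∈ Finset.range T, ‖fderiv ℝ f (W t)‖ ^ 2 ≤
      (f (W 0) - sInf (Set.range f)) / (μ * η * T) + L / (2 * μ) * η * ρ ^ 2 := by
  have : (0 : ℝ) < T := by exact_mod_cast hT
  have herror : L / 2 * ∑ t ∈ Finset.range T, ‖ΔW t‖ ^ 2 ≤ L / 2 * (T * (η * ρ) ^ 2) := by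
    -- On the zero space the Lipschitz condition does not force `0 ≤ L`.
    rcases subsingleton_or_nontrivial E with hE | hE
    · simp [hρ hE, Subsingleton.elim (ΔW _) 0]
    · have hL : 0 ≤ L := nonneg_of_norm_sub_le_mul hlip
      have hsum : ∑ t ∈ Finset.range T, ‖ΔW t‖ ^ 2 ≤ T * (η * ρ) ^ 2 := by
        simpa using Finset.sum_le_card_nsmul (Finset.range T) (fun t ↦ ‖ΔW t‖ ^ 2) _
          fun t _ ↦ pow_le_pow_left₀ (norm_nonneg _) (hbound t) 2
      gcongr
  have hinf : sInf (Set.range f) ≤ f (W T) := csInf_le hbdd (Set.mem_range_self _)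
  calc (1 / (T : ℝ)) * ∑ t ∈ Finset.range T, ‖fderiv ℝ f (W t)‖ ^ 2
      = (μ * η * ∑ t ∈ Finset.range T, ‖fderiv ℝ f (W t)‖ ^ 2) / (μ * η * T) := by field_simp
    _ ≤ (f (W 0) - sInf (Set.range f) + L / 2 * (T * (η * ρ) ^ 2)) / (μ * η * T) := by
        gcongr
        linarith [mul_sum_norm_fderiv_sq_le hdiff hlip hstep halign T]
    _ = (f (W 0) - sInf (Set.range f)) / (μ * η * T) + L / (2 * μ) * η * ρ ^ 2 := by field_simp

/-- Stationarity guarantee for RMS-calibrated, damping-only updates: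
if `f` is `L`-smooth on `ℝ^{m×n}` (Frobenius geometry) and bounded below with
infimum `f⋆ = sInf (range f)`, `η, μ > 0`, and the iterates satisfy
`W_{t+1} = W_t + ΔW_t` with alignment `⟨∇f(W_t), ΔW_t⟩ ≤ −μη‖∇f(W_t)‖²` and
norm bound `‖ΔW_t‖ ≤ η√(mn)`, then for every `T ≥ 1`,
`(1/T)Σ_{t<T} ‖∇f(W_t)‖² ≤ (f(W_0) − f⋆)/(μηT) + (L/(2μ))·η·mn`. -/
theorem trasmuon_stationarity {m n : ℕ}
    (f : EuclideanSpace ℝ (Fin m × Fin n) → ℝ) (L η μ : ℝ)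
    (hdiff : Differentiable ℝ f)
    (hlip : ∀ X Y, ‖gradient f X - gradient f Y‖ ≤ L * ‖X - Y‖)
    (hbdd : BddBelow (Set.range f))
    (hη : 0 < η) (hμ : 0 < μ)
    (W ΔW : ℕ → EuclideanSpace ℝ (Fin m × Fin n))
    (hstep : ∀ t, W (t + 1) = W t + ΔW t)
    (halign : ∀ t, ⟪gradient f (W t), ΔW t⟫ ≤ -(μ * η * ‖gradient f (W t)‖ ^ 2))
    (hbound : ∀ t, ‖ΔW t‖ ≤ η * Real.sqrt (m * n)) :
    ∀ T : ℕ, 1 ≤ T →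
      (1 / (T : ℝ)) * ∑ t ∈ Finset.range T, ‖gradient f (W t)‖ ^ 2 ≤
        (f (W 0) - sInf (Set.range f)) / (μ * η * T) + L / (2 * μ) * η * (m * n) := by
  simp only [gradient, ← map_sub, LinearIsometryEquiv.norm_map,
    InnerProductSpace.toDual_symm_apply] at hlip halign ⊢
  simpa only [Real.sq_sqrt (by positivity : (0 : ℝ) ≤ m * n)] using
    trasmuon_stationarity_general hdiff hlip hbdd hη hμ
      sqrt_mul_eq_zero_of_subsingleton_euclideanSpace hstep halign hbound
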